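/- arXiv:2401.08013 — 4 statements merged into one kernel-verified Lean document; each statement's English description precedes it below -/
import Mathlib

section
/- Starting from any s^0 ∈ ℝ^K, the CULO model produces a sequence of strategies p^t (t = 0, 1, 2, …, all strictly positive) satisfying ⟨e, log p^t⟩ = −r·⟨e, s^0⟩ for every t ≥ 0 and every e ∈ ker(Σ) ∩ ker(Λ). -/
/-!
Taking logarithms in the logit map gives `log pₖ = -r sₖ - log Z(od k)`. The normaliser depends on
the OD pair only, so `log p + r s` lies in the row space of `Σ`, which is orthogonal to `ker Σ`.
Every update of `s` adds a vector of the row space of `Λ`, which is orthogonal to `ker Λ`, so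
`⟨e, sᵗ⟩` is a conserved quantity.
-/

open Matrix Filter Finset Topology

noncomputable section

variable {A W K : Type*}

/-- OD-route incidence matrix `Σ`: each column is the standard unit vector at `od k`
(every route `k` serves exactly one OD pair, `od k`). -/
def Sig [DecidableEq W] (od : K → W) : Matrix W K ℝ :=
  Matrix.of fun w k => if od k = w then 1 else 0

/-- The strategy set `P = {p : p ≥ 0, Σ p = 1}`. -/
def Pset [Fintype K] [DecidableEq W] (od : K → W) : Set (K → ℝ) :=
  {p | (∀ k, 0 ≤ p k) ∧ ∀ w : W, (Sig od).mulVec p w = 1}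

/-- `q = Σᵀ d`. -/
def qvec [Fintype W] [DecidableEq W] (od : K → W) (d : W → ℝ) : K → ℝ :=
  (Sig od)ᵀ.mulVec d

/-- `bΛ = Λ · diag q`. -/
def bLam [Fintype K] [Fintype W] [DecidableEq W] [DecidableEq K]
    (Λ : Matrix A K ℝ) (od : K → W) (d : W → ℝ) : Matrix A K ℝ :=
  Λ * Matrix.diagonal (qvec od d)

/-- The link-flow set `X = {bΛ p : p ∈ P}`. -/
def Xset [Fintype K] [Fintype W] [DecidableEq W] [DecidableEq K]
    (Λ : Matrix A K ℝ) (od : K → W) (d : W → ℝ) : Set (A → ℝ) :=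
  (fun p => (bLam Λ od d).mulVec p) '' Pset od

/-- The route-cost map `c(p) = Λᵀ u(bΛ p)`. -/
def routeCost [Fintype A] [Fintype K] [Fintype W] [DecidableEq W] [DecidableEq K]
    (Λ : Matrix A K ℝ) (od : K → W) (d : W → ℝ)
    (u : (A → ℝ) → (A → ℝ)) : (K → ℝ) → (K → ℝ) :=
  fun p => Λᵀ.mulVec (u ((bLam Λ od d).mulVec p))

/-- The UE set `P*`: solutions of the variational inequality. -/
def UEset [Fintype A] [Fintype K] [Fintype W] [DecidableEq W] [DecidableEq K]
    (Λ : Matrix A K ℝ) (od : K → W) (d : W → ℝ)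
    (u : (A → ℝ) → (A → ℝ)) : Set (K → ℝ) :=
  {p | p ∈ Pset od ∧ ∀ p' ∈ Pset od, 0 ≤ routeCost Λ od d u p ⬝ᵥ (p' - p)}

/-- The logit map `q_r`. -/
def logit [Fintype K] [DecidableEq W] (od : K → W) (r : ℝ) (s : K → ℝ) : K → ℝ :=
  fun k => Real.exp (-r * s k) /
    ∑ k' ∈ Finset.univ.filter (fun k' => od k' = od k), Real.exp (-r * s k')

/-- The negative entropy `φ(p) = ∑ₖ qₖ pₖ log pₖ` (with `0·log 0 = 0`). -/
def negEnt [Fintype K] [Fintype W] [DecidableEq W] (od : K → W) (d : W → ℝ)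
    (p : K → ℝ) : ℝ :=
  ∑ k, qvec od d k * (p k * Real.log (p k))

/-- The KL divergence `D(p, p') = ∑ₖ qₖ pₖ (log pₖ − log p'ₖ)` (with `0·log 0 = 0`). -/
def KLdiv [Fintype K] [Fintype W] [DecidableEq W] (od : K → W) (d : W → ℝ)
    (p p' : K → ℝ) : ℝ :=
  ∑ k, qvec od d k * (p k * (Real.log (p k) - Real.log (p' k)))

theorem dotProduct_transpose_mulVec_eq_zero {m n R : Type*} [Fintype m] [Fintype n]
    [CommSemiring R] {M : Matrix m n R} {e : n → R} (he : M *ᵥ e = 0) (v : m → R) :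
    e ⬝ᵥ (Mᵀ *ᵥ v) = 0 := by
  rw [dotProduct_mulVec, vecMul_transpose, he, zero_dotProduct]

theorem dotProduct_eq_initial_of_mulVec_eq_zero [Fintype A] [Fintype K] {R : Type*}
    [CommSemiring R] {Λ : Matrix A K R} {η : ℕ → R} {v : ℕ → A → R} {s : ℕ → K → R}
    (hs : ∀ t, s (t + 1) = s t + η (t + 1) • (Λᵀ *ᵥ v t)) {e : K → R} (he : Λ *ᵥ e = 0) (t : ℕ) :
    e ⬝ᵥ s t = e ⬝ᵥ s 0 := by
  induction t with
  | zero => rfl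
  | succ t ih =>
    rw [hs, dotProduct_add, dotProduct_smul, dotProduct_transpose_mulVec_eq_zero he, smul_zero,
      add_zero, ih]

section Logit

variable [Fintype K] [DecidableEq W] (od : K → W)

theorem Sig_mulVec_apply (e : K → ℝ) (w : W) : (Sig od *ᵥ e) w = ∑ k with od k = w, e k := by
  simp [Sig, mulVec, dotProduct, sum_filter]

theorem dotProduct_comp_od (e : K → ℝ) (g : W → ℝ) :
    e ⬝ᵥ (g ∘ od) = ∑ w ∈ univ.image od, (Sig od *ᵥ e) w * g w := by
  calc e ⬝ᵥ (g ∘ od)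
      = ∑ w ∈ univ.image od, ∑ k with od k = w, e k * g (od k) :=
        (sum_fiberwise_of_maps_to (fun k _ => mem_image_of_mem od (mem_univ k)) _).symm
    _ = ∑ w ∈ univ.image od, (Sig od *ᵥ e) w * g w := by
        refine sum_congr rfl fun w _ => ?_
        rw [Sig_mulVec_apply, sum_mul]
        exact sum_congr rfl fun k hk => by rw [(mem_filter.mp hk).2]

theorem dotProduct_comp_od_eq_zero {e : K → ℝ} (he : Sig od *ᵥ e = 0) (g : W → ℝ) :
    e ⬝ᵥ (g ∘ od) = 0 := by
  simp [dotProduct_comp_od, he]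

/-- The normaliser `Z(w)` of the logit map: the sum of `exp (-r sₖ)` over the routes `k` serving the
OD pair `w`. It is `0` at an OD pair without routes. -/
def logitNormalizer (r : ℝ) (s : K → ℝ) (w : W) : ℝ :=
  ∑ k with od k = w, Real.exp (-r * s k)

theorem logitNormalizer_pos (r : ℝ) (s : K → ℝ) (k : K) : 0 < logitNormalizer od r s (od k) :=
  sum_pos (fun _ _ => Real.exp_pos _) ⟨k, by simp⟩

theorem logit_pos (r : ℝ) (s : K → ℝ) (k : K) : 0 < logit od r s k :=
  div_pos (Real.exp_pos _) (logitNormalizer_pos od r s k)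

theorem log_logit (r : ℝ) (s : K → ℝ) :
    (fun k => Real.log (logit od r s k)) =
      -r • s - (fun w => Real.log (logitNormalizer od r s w)) ∘ od := by
  funext k
  change Real.log (Real.exp (-r * s k) / logitNormalizer od r s (od k)) =
    -r * s k - Real.log (logitNormalizer od r s (od k))
  rw [Real.log_div (Real.exp_ne_zero _) (logitNormalizer_pos od r s k).ne', Real.log_exp]

theorem dotProduct_log_logit (r : ℝ) (s : K → ℝ) {e : K → ℝ} (he : Sig od *ᵥ e = 0) :
    e ⬝ᵥ (fun k => Real.log (logit od r s k)) = -r * (e ⬝ᵥ s) := by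
  rw [log_logit, dotProduct_sub, dotProduct_comp_od_eq_zero od he, sub_zero, dotProduct_smul,
    smul_eq_mul]

end Logit

theorem statement5_general [Fintype A] [Fintype K] [DecidableEq W]
    (Λ : Matrix A K ℝ) (od : K → W) (r : ℝ) (η : ℕ → ℝ) (v : ℕ → A → ℝ)
    (s : ℕ → K → ℝ) (p : ℕ → K → ℝ)
    (hs : ∀ t, s (t + 1) = s t + η (t + 1) • (Λᵀ *ᵥ v t))
    (hp : ∀ t, p t = logit od r (s t)) :
    (∀ t k, 0 < p t k) ∧
    ∀ t, ∀ e : K → ℝ, Sig od *ᵥ e = 0 → Λ *ᵥ e = 0 →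
      e ⬝ᵥ (fun k => Real.log (p t k)) = -r * (e ⬝ᵥ s 0) := by
  obtain rfl : p = fun t => logit od r (s t) := funext hp
  refine ⟨fun t => logit_pos od r (s t), fun t e heSig heLam => ?_⟩
  rw [dotProduct_log_logit od r (s t) heSig, dotProduct_eq_initial_of_mulVec_eq_zero hs heLam]

/-- Lemma 1: starting from any `s⁰ ∈ ℝ^K`, the CULO model produces a
sequence of strategies `pᵗ` (all strictly positive) with
`⟨e, log pᵗ⟩ = −r·⟨e, s⁰⟩` for every `t ≥ 0` and every `e ∈ ker Σ ∩ ker Λ`. -/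
theorem statement5
    [Fintype A] [Fintype W] [Fintype K] [DecidableEq W] [DecidableEq K]
    (Λ : Matrix A K ℝ) (od : K → W) (d : W → ℝ)
    (hΛ : ∀ a k, Λ a k = 0 ∨ Λ a k = 1)
    (hd : ∀ w, 0 < d w)
    (u : (A → ℝ) → (A → ℝ))
    (r : ℝ) (hr : 0 < r)
    (η : ℕ → ℝ) (hη : ∀ t, 0 < η t)
    (s : ℕ → K → ℝ) (p : ℕ → K → ℝ) (s0 : K → ℝ)
    (hs0 : s 0 = s0)
    (hsdyn : ∀ t, s (t + 1) = s t + η (t + 1) • routeCost Λ od d u (p t))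
    (hpdyn : ∀ t, p t = logit od r (s t)) :
    (∀ t k, 0 < p t k) ∧
    ∀ t, ∀ e : K → ℝ, (Sig od).mulVec e = 0 → Λ.mulVec e = 0 →
      e ⬝ᵥ (fun k => Real.log (p t k)) = -r * (e ⬝ᵥ s0) := by
  subst hs0
  exact statement5_general Λ od r η (fun t => u (bLam Λ od d *ᵥ p t)) s p hsdyn hpdyn
end
end

section
/- Let p^0 ∈ P and p̄* ∈ P* be strictly positive componentwise. If ⟨e, log p̄* − log p^0⟩ = 0 for every e ∈ ker(Σ) ∩ ker(Λ), then p̄* is the KL projection of p^0 onto P*: D(p̄*, p^0) ≤ D(p*, p^0) for every p* ∈ P*. -/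
/-!
All user equilibria share one link flow. Each block of `P` has constant total mass, so `P` is stable
under moving from `p` towards `p'` at a different rate in each OD pair. Testing the variational
inequality at rates proportional to the demands turns it into the link-flow inequality
`⟨u(x), x' - x⟩ ≥ 0`, whose solution is unique because `u` is strictly monotone.

Hence for `p ∈ P*` the route-flow difference `q * (p - p̄)` lies in `ker Σ ∩ ker Λ`, and the
hypothesis on `p̄` gives the Pythagorean identity `D(p, p⁰) = D(p, p̄) + D(p̄, p⁰)`, where
`D(p, p̄) ≥ 0` by Gibbs' inequality.
-/

open Matrix Filter Finset Topology

noncomputable section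

variable {A W K : Type*}

section General

lemma sub_le_mul_log_sub_log {a b : ℝ} (ha : 0 ≤ a) (hb : 0 < b) :
    a - b ≤ a * (Real.log a - Real.log b) := by
  rcases ha.eq_or_lt with rfl | ha
  · simp [hb.le]
  · calc a - b = a * (1 - (a / b)⁻¹) := by field_simp
      _ ≤ a * Real.log (a / b) := by
        gcongr
        exact Real.one_sub_inv_le_log_of_pos (div_pos ha hb)
      _ = a * (Real.log a - Real.log b) := by rw [Real.log_div ha.ne' hb.ne']

lemma eq_of_strictMonotone_of_variationalInequality [Fintype A] {X : Set (A → ℝ)}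
    {u : (A → ℝ) → (A → ℝ)}
    (hmono : ∀ x ∈ X, ∀ x' ∈ X, x ≠ x' → 0 < (u x - u x') ⬝ᵥ (x - x'))
    {x x' : A → ℝ} (hx : x ∈ X) (hx' : x' ∈ X)
    (hvi : 0 ≤ u x ⬝ᵥ (x' - x)) (hvi' : 0 ≤ u x' ⬝ᵥ (x - x')) : x = x' := by
  by_contra hne
  have hpos := hmono x hx x' hx' hne
  simp only [sub_dotProduct, dotProduct_sub] at hpos hvi hvi'
  linarith

end General

section Incidence

variable [DecidableEq W]

lemma sig_mulVec_apply [Fintype K] (od : K → W) (p : K → ℝ) (w : W) :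
    (Sig od *ᵥ p) w = ∑ k, if od k = w then p k else 0 := by
  simp [Sig, mulVec, dotProduct]

variable [Fintype W]

lemma qvec_apply (od : K → W) (d : W → ℝ) (k : K) : qvec od d k = d (od k) := by
  simp [qvec, Sig, mulVec, dotProduct]

lemma qvec_nonneg (od : K → W) {d : W → ℝ} (hd : 0 ≤ d) : 0 ≤ qvec od d :=
  fun k => (hd (od k)).trans_eq (qvec_apply od d k).symm

lemma qvec_smul (od : K → W) (t : ℝ) (d : W → ℝ) : qvec od (t • d) = t • qvec od d :=
  mulVec_smul _ t d

variable [Fintype K]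

lemma sum_sig_mulVec (od : K → W) (p : K → ℝ) : ∑ w, (Sig od *ᵥ p) w = ∑ k, p k := by
  simp only [sig_mulVec_apply]
  rw [Finset.sum_comm]
  simp

lemma sig_mulVec_qvec_mul (od : K → W) (d : W → ℝ) (p : K → ℝ) :
    Sig od *ᵥ (qvec od d * p) = d * Sig od *ᵥ p := by
  ext w
  simp only [Pi.mul_apply, sig_mulVec_apply, qvec_apply, Finset.mul_sum, mul_ite, mul_zero]
  refine Finset.sum_congr rfl fun k _ => ?_
  split_ifs with hk
  · rw [hk]
  · rfl

lemma sig_mulVec_qvec_mul_sub_eq_zero {od : K → W} {p p' : K → ℝ}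
    (h : Sig od *ᵥ p = Sig od *ᵥ p') (d : W → ℝ) : Sig od *ᵥ (qvec od d * (p - p')) = 0 := by
  rw [sig_mulVec_qvec_mul, mulVec_sub, h, sub_self, mul_zero]

lemma bLam_mulVec [DecidableEq K] (Λ : Matrix A K ℝ) (od : K → W) (d : W → ℝ) (p : K → ℝ) :
    bLam Λ od d *ᵥ p = Λ *ᵥ (qvec od d * p) := by
  rw [bLam, ← mulVec_mulVec, funext (mulVec_diagonal (qvec od d) p), ← Pi.mul_def]

lemma routeCost_dotProduct_qvec_mul [Fintype A] [DecidableEq K] (Λ : Matrix A K ℝ) (od : K → W)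
    (d : W → ℝ) (u : (A → ℝ) → (A → ℝ)) (p v : K → ℝ) :
    routeCost Λ od d u p ⬝ᵥ (qvec od d * v) = u (bLam Λ od d *ᵥ p) ⬝ᵥ (bLam Λ od d *ᵥ v) := by
  rw [routeCost, mulVec_transpose, ← dotProduct_mulVec, ← bLam_mulVec]

end Incidence

section Equilibrium

variable [Fintype K] [DecidableEq W] {od : K → W} {d : W → ℝ} {p p' : K → ℝ}

lemma sig_mulVec_eq_of_mem_pset (hp : p ∈ Pset od) (hp' : p' ∈ Pset od) :
    Sig od *ᵥ p = Sig od *ᵥ p' :=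
  funext fun w => (hp.2 w).trans (hp'.2 w).symm

variable [Fintype W]

lemma add_qvec_mul_sub_mem_pset {t : W → ℝ} (ht0 : 0 ≤ t) (ht1 : t ≤ 1)
    (hp : p ∈ Pset od) (hp' : p' ∈ Pset od) : p + qvec od t * (p' - p) ∈ Pset od := by
  refine ⟨fun k => ?_, fun w => ?_⟩
  · have hconvex : 0 ≤ (1 - t (od k)) * p k + t (od k) * p' k :=
      add_nonneg (mul_nonneg (sub_nonneg.2 (ht1 _)) (hp.1 k)) (mul_nonneg (ht0 _) (hp'.1 k))
    refine hconvex.trans_eq ?_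
    simp only [Pi.add_apply, Pi.mul_apply, Pi.sub_apply, qvec_apply]
    ring
  · rw [mulVec_add, sig_mulVec_qvec_mul_sub_eq_zero (sig_mulVec_eq_of_mem_pset hp' hp), add_zero,
      hp.2 w]

lemma dotProduct_qvec_mul_sub_nonneg (hd : 0 ≤ d) {c : K → ℝ} (hp : p ∈ Pset od)
    (hvi : ∀ p' ∈ Pset od, 0 ≤ c ⬝ᵥ (p' - p)) (hp' : p' ∈ Pset od) :
    0 ≤ c ⬝ᵥ (qvec od d * (p' - p)) := by
  have hsum : 0 ≤ ∑ w, d w := Finset.sum_nonneg fun w _ => hd w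
  set t : ℝ := (1 + ∑ w, d w)⁻¹ with ht
  have htpos : 0 < t := by positivity
  have htd : t • d ≤ 1 := fun w => by
    have hdw : d w ≤ ∑ w, d w := Finset.single_le_sum (fun w _ => hd w) (Finset.mem_univ w)
    rw [Pi.smul_apply, smul_eq_mul, ht, inv_mul_eq_div, Pi.one_apply, div_le_one (by positivity)]
    linarith
  have htest := hvi _ (add_qvec_mul_sub_mem_pset (smul_nonneg htpos.le hd) htd hp hp')
  rw [add_sub_cancel_left, qvec_smul, smul_mul_assoc, dotProduct_smul, smul_eq_mul] at htest
  exact nonneg_of_mul_nonneg_right htest htpos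

variable [Fintype A] [DecidableEq K] {Λ : Matrix A K ℝ} {u : (A → ℝ) → (A → ℝ)}

lemma linkFlow_variationalInequality (hd : 0 ≤ d) (hp : p ∈ UEset Λ od d u) (hp' : p' ∈ Pset od) :
    0 ≤ u (bLam Λ od d *ᵥ p) ⬝ᵥ (bLam Λ od d *ᵥ p' - bLam Λ od d *ᵥ p) := by
  rw [← mulVec_sub, ← routeCost_dotProduct_qvec_mul]
  exact dotProduct_qvec_mul_sub_nonneg hd hp.1 hp.2 hp'

lemma linkFlow_eq_of_mem_ueSet (hd : 0 ≤ d)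
    (hmono : ∀ x ∈ Xset Λ od d, ∀ x' ∈ Xset Λ od d, x ≠ x' → 0 < (u x - u x') ⬝ᵥ (x - x'))
    (hp : p ∈ UEset Λ od d u) (hp' : p' ∈ UEset Λ od d u) :
    bLam Λ od d *ᵥ p = bLam Λ od d *ᵥ p' :=
  eq_of_strictMonotone_of_variationalInequality hmono ⟨p, hp.1, rfl⟩ ⟨p', hp'.1, rfl⟩
    (linkFlow_variationalInequality hd hp hp'.1) (linkFlow_variationalInequality hd hp' hp.1)

end Equilibrium

section KullbackLeibler

variable [Fintype W] [Fintype K] [DecidableEq W]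

lemma klDiv_nonneg {od : K → W} {d : W → ℝ} (hd : 0 ≤ d) {p p' : K → ℝ} (hp : ∀ k, 0 ≤ p k)
    (hp' : ∀ k, 0 < p' k) (h : Sig od *ᵥ p = Sig od *ᵥ p') : 0 ≤ KLdiv od d p p' :=
  calc 0 = ∑ w, (Sig od *ᵥ (qvec od d * (p - p'))) w := by
        simp [sig_mulVec_qvec_mul_sub_eq_zero h]
    _ = ∑ k, qvec od d k * (p k - p' k) := sum_sig_mulVec od _
    _ ≤ KLdiv od d p p' := Finset.sum_le_sum fun k _ =>
        mul_le_mul_of_nonneg_left (sub_le_mul_log_sub_log (hp k) (hp' k)) (qvec_nonneg od hd k)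

lemma klDiv_eq_add_add_dotProduct (od : K → W) (d : W → ℝ) (p p' r : K → ℝ) :
    KLdiv od d p r = KLdiv od d p p' + KLdiv od d p' r +
      (qvec od d * (p - p')) ⬝ᵥ fun k => Real.log (p' k) - Real.log (r k) := by
  simp only [KLdiv, dotProduct, Pi.mul_apply, Pi.sub_apply, ← Finset.sum_add_distrib]
  exact Finset.sum_congr rfl fun k _ => by ring

end KullbackLeibler

theorem statement6_general
    [Fintype A] [Fintype W] [Fintype K] [DecidableEq W] [DecidableEq K]
    (Λ : Matrix A K ℝ) (od : K → W) (d : W → ℝ) (hd : 0 ≤ d)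
    (u : (A → ℝ) → (A → ℝ))
    (hmono : ∀ x ∈ Xset Λ od d, ∀ x' ∈ Xset Λ od d, x ≠ x' →
      0 < (u x - u x') ⬝ᵥ (x - x'))
    (p0 : K → ℝ) (_hp0pos : ∀ k, 0 < p0 k)
    (pbar : K → ℝ) (hpbar : pbar ∈ UEset Λ od d u) (hpbarpos : ∀ k, 0 < pbar k)
    (hprop : ∀ e : K → ℝ, (Sig od).mulVec e = 0 → Λ.mulVec e = 0 →
      e ⬝ᵥ (fun k => Real.log (pbar k) - Real.log (p0 k)) = 0) :
    ∀ p ∈ UEset Λ od d u, KLdiv od d pbar p0 ≤ KLdiv od d p p0 := by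
  intro p hp
  have hmass : Sig od *ᵥ p = Sig od *ᵥ pbar := sig_mulVec_eq_of_mem_pset hp.1 hpbar.1
  have hkerΛ : Λ *ᵥ (qvec od d * (p - pbar)) = 0 := by
    rw [← bLam_mulVec, mulVec_sub, linkFlow_eq_of_mem_ueSet hd hmono hp hpbar, sub_self]
  have hpythagoras : KLdiv od d p p0 = KLdiv od d p pbar + KLdiv od d pbar p0 := by
    rw [klDiv_eq_add_add_dotProduct od d p pbar p0,
      hprop _ (sig_mulVec_qvec_mul_sub_eq_zero hmass d) hkerΛ, add_zero]
  rw [hpythagoras]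
  exact le_add_of_nonneg_left (klDiv_nonneg hd hp.1.1 hpbarpos hmass)

/-- Lemma 2: let `p⁰ ∈ P` and `p̄* ∈ P*` be strictly positive.
If `⟨e, log p̄* − log p⁰⟩ = 0` for every `e ∈ ker Σ ∩ ker Λ`, then `p̄*` is the KL
projection of `p⁰` onto `P*`: `D(p̄*, p⁰) ≤ D(p*, p⁰)` for every `p* ∈ P*`. -/
theorem statement6
    [Fintype A] [Fintype W] [Fintype K] [DecidableEq W] [DecidableEq K]
    (Λ : Matrix A K ℝ) (od : K → W) (d : W → ℝ)
    (hΛ : ∀ a k, Λ a k = 0 ∨ Λ a k = 1)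
    (hd : ∀ w, 0 < d w)
    (u : (A → ℝ) → (A → ℝ))
    (hu : ContinuousOn u (Xset Λ od d))
    (hmono : ∀ x ∈ Xset Λ od d, ∀ x' ∈ Xset Λ od d, x ≠ x' →
      0 < (u x - u x') ⬝ᵥ (x - x'))
    (p0 : K → ℝ) (hp0 : p0 ∈ Pset od) (hp0pos : ∀ k, 0 < p0 k)
    (pbar : K → ℝ) (hpbar : pbar ∈ UEset Λ od d u) (hpbarpos : ∀ k, 0 < pbar k)
    (hprop : ∀ e : K → ℝ, (Sig od).mulVec e = 0 → Λ.mulVec e = 0 →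
      e ⬝ᵥ (fun k => Real.log (pbar k) - Real.log (p0 k)) = 0) :
    ∀ p ∈ UEset Λ od d u, KLdiv od d pbar p0 ≤ KLdiv od d p p0 :=
  statement6_general Λ od d (fun w => (hd w).le) u hmono p0 hp0pos pbar hpbar hpbarpos hprop
end
end

section
/- The KL projection map onto the UE set is continuous in the initial strategy: the map that assigns to each strictly positive p^0 ∈ P the unique minimizer of D(·, p^0) over P* is continuous on the set of strictly positive elements of P. -/
/-!
Since `q` is constant on the routes of an OD pair, weighting the route costs by `q` does not change
the solutions of the variational inequality over `P`. The weighted cost is `bΛᵀ u(bΛ p)`, so `P*`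
consists of the `p ∈ P` whose link flow `bΛ p` solves the variational inequality for `u` over `X`.
Strict monotonicity leaves at most one such flow: `P*` is a slice of the polytope `P`, hence compact
and convex.

On such a set the strictly convex function `D(·, p⁰)` has at most one minimizer. As `D` is jointly
continuous where `p⁰ > 0`, every cluster point of `F p` as `p → p⁰` minimizes `D(·, p⁰)` and so is
`F p⁰`; compactness turns this into continuity of `F`.
-/

open Matrix Filter Finset Topology

noncomputable section

variable {A W K : Type*}

section Minimizers

/-- A special case of Berge's maximum theorem. -/
lemma continuousOn_of_unique_isMinOn {X Y R : Type*} [TopologicalSpace X] [TopologicalSpace Y]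
    [TopologicalSpace R] [Preorder R] [OrderClosedTopology R]
    {S : Set Y} {T : Set X} {f : Y → X → R} {F : X → Y} (hS : IsCompact S)
    (hf : ContinuousOn (Function.uncurry f) (S ×ˢ T)) (hFS : Set.MapsTo F T S)
    (hmin : ∀ x ∈ T, IsMinOn (f · x) S (F x))
    (hunique : ∀ x ∈ T, ∀ y ∈ S, IsMinOn (f · x) S y → y = F x) :
    ContinuousOn F T := by
  intro x hx
  have hFS' : ∀ᶠ x' in 𝓝[T] x, F x' ∈ S := eventually_mem_nhdsWithin.mono hFS
  refine hS.tendsto_nhds_of_unique_mapClusterPt hFS' fun y hy hcluster ↦ hunique x hx y hy ?_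
  obtain ⟨U, hUx, hUy⟩ := mapClusterPt_iff_ultrafilter.1 hcluster
  have tendsto_f {g : X → Y} {z : Y} (hz : z ∈ S) (hgS : ∀ᶠ x' in U, g x' ∈ S)
      (hg : Tendsto g U (𝓝 z)) : Tendsto (fun x' ↦ f (g x') x') U (𝓝 (f z x)) := by
    have hgx : Tendsto (fun x' ↦ (g x', x')) U (𝓝[S ×ˢ T] (z, x)) := by
      rw [nhdsWithin_prod_eq]
      exact (tendsto_nhdsWithin_iff.2 ⟨hg, hgS⟩).prodMk hUx
    exact (hf (z, x) ⟨hz, hx⟩).tendsto.comp hgx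
  refine isMinOn_iff.2 fun z hz ↦ le_of_tendsto_of_tendsto (tendsto_f hy (hUx hFS') hUy)
    (tendsto_f hz (.of_forall fun _ ↦ hz) tendsto_const_nhds) ?_
  exact hUx (eventually_mem_nhdsWithin.mono fun x' hx' ↦ hmin x' hx' hz)

lemma strictConvexOn_sum_mul_apply {ι : Type*} [Fintype ι] {E : ι → Type*}
    [∀ i, AddCommGroup (E i)] [∀ i, Module ℝ (E i)] {s : ∀ i, Set (E i)} {f : ∀ i, E i → ℝ}
    {c : ι → ℝ} (hc : ∀ i, 0 < c i) (hf : ∀ i, StrictConvexOn ℝ (s i) (f i)) :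
    StrictConvexOn ℝ (Set.univ.pi s) fun x ↦ ∑ i, c i * f i (x i) := by
  refine ⟨convex_pi fun i _ ↦ (hf i).1, fun x hx y hy hxy a b ha hb hab ↦ ?_⟩
  obtain ⟨j, hj⟩ := Function.ne_iff.1 hxy
  calc ∑ i, c i * f i (a • x i + b • y i)
      < ∑ i, c i * (a • f i (x i) + b • f i (y i)) := by
        refine Finset.sum_lt_sum (fun i _ ↦ ?_) ⟨j, Finset.mem_univ j, ?_⟩
        · exact mul_le_mul_of_nonneg_left
            ((hf i).convexOn.2 (hx i trivial) (hy i trivial) ha.le hb.le hab) (hc i).le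
        · exact mul_lt_mul_of_pos_left
            ((hf j).2 (hx j trivial) (hy j trivial) hj ha hb hab) (hc j)
    _ = a • ∑ i, c i * f i (x i) + b • ∑ i, c i * f i (y i) := by
        simp only [smul_eq_mul, Finset.mul_sum, ← Finset.sum_add_distrib]
        exact Finset.sum_congr rfl fun i _ ↦ by ring

lemma strictConvexOn_mul_log_sub (c : ℝ) :
    StrictConvexOn ℝ (Set.Ici 0) fun x ↦ x * (Real.log x - c) := by
  simp only [mul_sub]
  exact Real.strictConvexOn_mul_log.sub_concaveOn
    ((LinearMap.mulRight ℝ c).concaveOn (convex_Ici 0))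

end Minimizers

section VariationalInequality

variable {ι κ : Type*} [Fintype ι]

/-- The solution set of the variational inequality with operator `f` over `C`; `UEset` is the case
`C = Pset od`, `f = routeCost Λ od d u`. -/
def VISolutions (C : Set (ι → ℝ)) (f : (ι → ℝ) → (ι → ℝ)) : Set (ι → ℝ) :=
  {x | x ∈ C ∧ ∀ y ∈ C, 0 ≤ f x ⬝ᵥ (y - x)}

lemma VISolutions_subsingleton {C : Set (ι → ℝ)} {f : (ι → ℝ) → (ι → ℝ)}
    (hf : ∀ x ∈ C, ∀ y ∈ C, x ≠ y → 0 < (f x - f y) ⬝ᵥ (x - y)) :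
    (VISolutions C f).Subsingleton := by
  rintro x ⟨hxC, hx⟩ y ⟨hyC, hy⟩
  by_contra hxy
  have hpos := hf x hxC y hyC hxy
  have hx_le := hx y hyC
  have hy_le := hy x hxC
  simp only [sub_dotProduct, dotProduct_sub] at hpos hx_le hy_le
  linarith

lemma VISolutions_transpose_mulVec [Fintype κ] (M : Matrix κ ι ℝ) (C : Set (ι → ℝ))
    (u : (κ → ℝ) → (κ → ℝ)) :
    VISolutions C (fun x ↦ Mᵀ *ᵥ u (M *ᵥ x)) =
      C ∩ (M *ᵥ ·) ⁻¹' VISolutions ((M *ᵥ ·) '' C) u := by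
  ext x
  simp only [VISolutions, Set.mem_inter_iff, Set.mem_preimage, Set.mem_ofPred_eq,
    Set.forall_mem_image, mulVec_transpose, ← dotProduct_mulVec, mulVec_sub]
  exact and_congr_right fun hx ↦ (and_iff_right (Set.mem_image_of_mem _ hx)).symm

end VariationalInequality

section Strategies

variable [Fintype K] [DecidableEq W] {od : K → W}

lemma Sig_mulVec_comp_mul (a : W → ℝ) (p : K → ℝ) :
    Sig od *ᵥ (a ∘ od * p) = a * Sig od *ᵥ p := by
  ext w
  simp only [Sig, mulVec, dotProduct, of_apply, Pi.mul_apply, Function.comp_apply, ite_mul, one_mul,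
    zero_mul, Finset.mul_sum]
  refine Finset.sum_congr rfl fun k _ ↦ ?_
  split_ifs with hk
  · rw [hk]
  · rw [mul_zero]

lemma comp_mul_add_comp_mul_mem_Pset {a b : W → ℝ} {p p' : K → ℝ} (hp : p ∈ Pset od)
    (hp' : p' ∈ Pset od) (ha : ∀ k, 0 ≤ a (od k)) (hb : ∀ k, 0 ≤ b (od k)) (hab : a + b = 1) :
    a ∘ od * p + b ∘ od * p' ∈ Pset od := by
  refine ⟨fun k ↦ add_nonneg (mul_nonneg (ha k) (hp.1 k)) (mul_nonneg (hb k) (hp'.1 k)),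
    fun w ↦ ?_⟩
  have hw : a w + b w = 1 := congrFun hab w
  simpa only [mulVec_add, Sig_mulVec_comp_mul, Pi.add_apply, Pi.mul_apply, hp.2 w, hp'.2 w, mul_one]

lemma convex_Pset (od : K → W) : Convex ℝ (Pset od) := fun _ hp _ hp' a b ha hb hab ↦
  comp_mul_add_comp_mul_mem_Pset (a := fun _ ↦ a) (b := fun _ ↦ b) hp hp' (fun _ ↦ ha) (fun _ ↦ hb)
    (funext fun _ ↦ hab)

lemma isClosed_Pset (od : K → W) : IsClosed (Pset od) := by
  simp only [Pset, Set.ofPred_and, Set.ofPred_forall]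
  exact (isClosed_iInter fun k ↦ isClosed_le continuous_const (continuous_apply k)).inter
    (isClosed_iInter fun w ↦ isClosed_eq (by fun_prop) continuous_const)

lemma Pset_subset_Icc (od : K → W) : Pset od ⊆ Set.Icc 0 1 := by
  rintro p ⟨hp_nonneg, hp_sum⟩
  refine ⟨hp_nonneg, fun k ↦ ?_⟩
  calc p k = Sig od (od k) k * p k := by simp [Sig]
    _ ≤ ∑ k', Sig od (od k) k' * p k' := by
        refine Finset.single_le_sum (f := fun k' ↦ Sig od (od k) k' * p k') (fun k' _ ↦ ?_)
          (Finset.mem_univ k)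
        refine mul_nonneg ?_ (hp_nonneg k')
        simp only [Sig, of_apply]
        positivity
    _ = 1 := hp_sum (od k)

lemma isCompact_Pset (od : K → W) : IsCompact (Pset od) :=
  isCompact_Icc.of_isClosed_subset (isClosed_Pset od) (Pset_subset_Icc od)

/-- The inequality is tested at `p + t (s ∘ od) (p' - p)`, which lies in `P` for small `t > 0`. -/
lemma VISolutions_Pset_subset_comp_mul {s : W → ℝ} (hs : ∀ k, 0 ≤ s (od k))
    (f : (K → ℝ) → (K → ℝ)) :
    VISolutions (Pset od) f ⊆ VISolutions (Pset od) fun p ↦ s ∘ od * f p := by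
  rintro p ⟨hp, hvi⟩
  refine ⟨hp, fun p' hp' ↦ ?_⟩
  obtain ⟨t, ht, hts⟩ : ∃ t > 0, ∀ k, t * s (od k) ≤ 1 := by
    obtain ⟨m, hm⟩ := Finite.bddAbove_range (s ∘ od)
    refine ⟨(max m 1)⁻¹, by positivity, fun k ↦ ?_⟩
    rw [inv_mul_le_iff₀ (by positivity), mul_one]
    exact (hm ⟨k, rfl⟩).trans (le_max_left m 1)
  have hmem : (1 - t • s) ∘ od * p + (t • s) ∘ od * p' ∈ Pset od :=
    comp_mul_add_comp_mul_mem_Pset hp hp' (fun k ↦ sub_nonneg.2 (hts k))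
      (fun k ↦ mul_nonneg ht.le (hs k)) (sub_add_cancel 1 _)
  have hscale : f p ⬝ᵥ ((1 - t • s) ∘ od * p + (t • s) ∘ od * p' - p) =
      t * ((s ∘ od * f p) ⬝ᵥ (p' - p)) := by
    simp only [dotProduct, Finset.mul_sum]
    refine Finset.sum_congr rfl fun k _ ↦ ?_
    simp only [Pi.sub_apply, Pi.add_apply, Pi.mul_apply, Function.comp_apply, Pi.smul_apply,
      Pi.one_apply, smul_eq_mul]
    ring
  exact nonneg_of_mul_nonneg_right (hscale ▸ hvi _ hmem) ht

lemma VISolutions_Pset_comp_mul {s : W → ℝ} (hs : ∀ k, 0 < s (od k)) (f : (K → ℝ) → (K → ℝ)) :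
    VISolutions (Pset od) (fun p ↦ s ∘ od * f p) = VISolutions (Pset od) f := by
  refine (VISolutions_Pset_subset_comp_mul (fun k ↦ (hs k).le) f).antisymm' ?_
  have hcancel : (fun p ↦ s⁻¹ ∘ od * (s ∘ od * f p)) = f := by
    ext p k
    exact inv_mul_cancel_left₀ (hs k).ne' (f p k)
  simpa only [hcancel] using VISolutions_Pset_subset_comp_mul (s := s⁻¹)
    (fun k ↦ (inv_pos.2 (hs k)).le) fun p ↦ s ∘ od * f p

end Strategies

section Divergence

variable [Fintype W] [DecidableEq W] {od : K → W} {d : W → ℝ}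

lemma qvec_eq_comp (od : K → W) (d : W → ℝ) : qvec od d = d ∘ od := by
  ext k
  simp [qvec, Sig, mulVec, dotProduct]

variable [Fintype K]

lemma strictConvexOn_KLdiv (hd : ∀ k, 0 < d (od k)) (p' : K → ℝ) :
    StrictConvexOn ℝ (Set.Ici 0) fun p ↦ KLdiv od d p p' := by
  simp only [KLdiv, qvec_eq_comp, ← Set.pi_univ_Ici]
  exact strictConvexOn_sum_mul_apply hd fun k ↦ strictConvexOn_mul_log_sub (Real.log (p' k))

lemma continuousOn_KLdiv (od : K → W) (d : W → ℝ) :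
    ContinuousOn (Function.uncurry (KLdiv od d)) {pp' | ∀ k, pp'.2 k ≠ 0} := by
  simp only [Function.uncurry_def, KLdiv, mul_sub]
  refine continuousOn_finsetSum _ fun k _ ↦ .sub ?_ ?_
  · have hmul_log : Continuous fun pp' : (K → ℝ) × (K → ℝ) ↦ pp'.1 k * Real.log (pp'.1 k) :=
      Real.continuous_mul_log.comp (by fun_prop)
    exact (continuous_const.mul hmul_log).continuousOn
  · have hlog : ContinuousOn (fun pp' : (K → ℝ) × (K → ℝ) ↦ Real.log (pp'.2 k))
        {pp' | ∀ k, pp'.2 k ≠ 0} :=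
      ContinuousOn.log (by fun_prop) fun _ h ↦ h k
    fun_prop

lemma continuousOn_of_isMinOn_KLdiv (hd : ∀ k, 0 < d (od k)) {S T : Set (K → ℝ)}
    {F : (K → ℝ) → (K → ℝ)} (hS : IsCompact S) (hS_convex : Convex ℝ S) (hS_nonneg : S ⊆ Set.Ici 0)
    (hT : ∀ p ∈ T, ∀ k, p k ≠ 0) (hFS : Set.MapsTo F T S)
    (hmin : ∀ p' ∈ T, IsMinOn (KLdiv od d · p') S (F p')) :
    ContinuousOn F T :=
  continuousOn_of_unique_isMinOn hS ((continuousOn_KLdiv od d).mono fun pp' h ↦ hT pp'.2 h.2) hFS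
    hmin fun p' hp' _ hy hy_min ↦ ((strictConvexOn_KLdiv hd p').subset hS_nonneg
      hS_convex).eq_of_isMinOn hy_min (hmin p' hp') hy (hFS hp')

end Divergence

section Equilibrium

variable [Fintype A] [Fintype W] [Fintype K] [DecidableEq W] [DecidableEq K]
  {Λ : Matrix A K ℝ} {od : K → W} {d : W → ℝ} {u : (A → ℝ) → (A → ℝ)}

lemma transpose_bLam_mulVec (Λ : Matrix A K ℝ) (od : K → W) (d : W → ℝ) (v : A → ℝ) :
    (bLam Λ od d)ᵀ *ᵥ v = d ∘ od * Λᵀ *ᵥ v := by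
  ext k
  rw [bLam, transpose_mul, diagonal_transpose, ← mulVec_mulVec, mulVec_diagonal, qvec_eq_comp,
    Pi.mul_apply]

lemma UEset_eq_inter_preimage_VISolutions (hd : ∀ k, 0 < d (od k)) (Λ : Matrix A K ℝ)
    (u : (A → ℝ) → (A → ℝ)) :
    UEset Λ od d u = Pset od ∩ (bLam Λ od d *ᵥ ·) ⁻¹' VISolutions (Xset Λ od d) u :=
  calc UEset Λ od d u
      = VISolutions (Pset od) fun p ↦ d ∘ od * routeCost Λ od d u p :=
        (VISolutions_Pset_comp_mul hd (routeCost Λ od d u)).symm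
    _ = VISolutions (Pset od) fun p ↦ (bLam Λ od d)ᵀ *ᵥ u (bLam Λ od d *ᵥ p) := by
        simp only [transpose_bLam_mulVec, routeCost]
    _ = Pset od ∩ (bLam Λ od d *ᵥ ·) ⁻¹' VISolutions (Xset Λ od d) u :=
        VISolutions_transpose_mulVec (bLam Λ od d) (Pset od) u

lemma isCompact_UEset (hd : ∀ k, 0 < d (od k))
    (hmono : ∀ x ∈ Xset Λ od d, ∀ x' ∈ Xset Λ od d, x ≠ x' → 0 < (u x - u x') ⬝ᵥ (x - x')) :
    IsCompact (UEset Λ od d u) := by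
  rw [UEset_eq_inter_preimage_VISolutions hd]
  exact (isCompact_Pset od).inter_right
    ((VISolutions_subsingleton hmono).isClosed.preimage (by fun_prop))

lemma convex_UEset (hd : ∀ k, 0 < d (od k))
    (hmono : ∀ x ∈ Xset Λ od d, ∀ x' ∈ Xset Λ od d, x ≠ x' → 0 < (u x - u x') ⬝ᵥ (x - x')) :
    Convex ℝ (UEset Λ od d u) := by
  rw [UEset_eq_inter_preimage_VISolutions hd]
  exact (convex_Pset od).inter
    ((VISolutions_subsingleton hmono).convex.linear_preimage (bLam Λ od d).mulVecLin)

end Equilibrium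

theorem statement9_general
    [Fintype A] [Fintype W] [Fintype K] [DecidableEq W] [DecidableEq K]
    (Λ : Matrix A K ℝ) (od : K → W) (d : W → ℝ)
    (hd : ∀ w, 0 < d w)
    (u : (A → ℝ) → (A → ℝ))
    (hmono : ∀ x ∈ Xset Λ od d, ∀ x' ∈ Xset Λ od d, x ≠ x' →
      0 < (u x - u x') ⬝ᵥ (x - x'))
    (F : (K → ℝ) → (K → ℝ))
    (hF : ∀ p0 ∈ {p ∈ Pset od | ∀ k, 0 < p k},
      F p0 ∈ UEset Λ od d u ∧
      ∀ p ∈ UEset Λ od d u, KLdiv od d (F p0) p0 ≤ KLdiv od d p p0) :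
    ContinuousOn F {p ∈ Pset od | ∀ k, 0 < p k} := by
  have hd_od : ∀ k, 0 < d (od k) := fun k ↦ hd (od k)
  have hUE_nonneg : UEset Λ od d u ⊆ Set.Ici 0 := fun _ hp ↦ hp.1.1
  exact continuousOn_of_isMinOn_KLdiv hd_od (isCompact_UEset hd_od hmono)
    (convex_UEset hd_od hmono) hUE_nonneg (fun _ hp k ↦ (hp.2 k).ne')
    (fun p0 hp0 ↦ (hF p0 hp0).1) fun p0 hp0 ↦ isMinOn_iff.2 (hF p0 hp0).2

/-- Corollary 2: the KL projection map onto the UE set is continuous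
in the initial strategy: any map `F` assigning to each strictly positive `p⁰ ∈ P` the
(unique) minimizer of `D(·, p⁰)` over `P*` is continuous on the set of strictly
positive elements of `P`. -/
theorem statement9
    [Fintype A] [Fintype W] [Fintype K] [DecidableEq W] [DecidableEq K]
    (Λ : Matrix A K ℝ) (od : K → W) (d : W → ℝ)
    (hΛ : ∀ a k, Λ a k = 0 ∨ Λ a k = 1)
    (hd : ∀ w, 0 < d w)
    (u : (A → ℝ) → (A → ℝ))
    (hu : ContinuousOn u (Xset Λ od d))
    (hmono : ∀ x ∈ Xset Λ od d, ∀ x' ∈ Xset Λ od d, x ≠ x' →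
      0 < (u x - u x') ⬝ᵥ (x - x'))
    (hne : (UEset Λ od d u).Nonempty)
    (F : (K → ℝ) → (K → ℝ))
    (hF : ∀ p0 ∈ {p ∈ Pset od | ∀ k, 0 < p k},
      F p0 ∈ UEset Λ od d u ∧
      ∀ p ∈ UEset Λ od d u, KLdiv od d (F p0) p0 ≤ KLdiv od d p p0) :
    ContinuousOn F {p ∈ Pset od | ∀ k, 0 < p k} :=
  statement9_general Λ od d hd u hmono F hF
end
end

section
/- Let s : ℝ → ℝ^K be differentiable and satisfy the continuous-time CULO dynamic ṡ(t) = c(p(t)) with p(t) = q_r(s(t)). Then p is differentiable and, for every OD pair w and every route k serving w, ṗ_k(t) = −r·p_k(t)·(c_k(p(t)) − Σ_{k' serving w} p_{k'}(t)·c_{k'}(p(t))); equivalently, ṗ_k/r equals the right-hand side of the replicator (proportional pairwise comparison) dynamic: p_k·Σ_{k'≠k, k' serving w} p_{k'}·[c_{k'}(p) − c_k(p)]₊ − p_k·Σ_{k'≠k, k' serving w} p_{k'}·[c_k(p) − c_{k'}(p)]₊. -/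
/-!
A component `pₖ = exp (-r sₖ) / Z` of the logit map is a normalized weight. Normalizing weights with
logarithmic derivatives `gₖ` subtracts from `gₖ` the `p`-average of `g`, because that average is the
logarithmic derivative of `Z`; here `gₖ = -r cₖ`.

For the replicator form, `[a]₊ - [-a]₊ = a` turns inflow minus outflow into
`∑ p_{k'} (c_{k'} - cₖ)`, in which the term `k' = k` vanishes, and `∑ p_{k'} = 1` turns this into
the average cost minus `cₖ`.
-/

open Matrix Filter Finset Topology

noncomputable section

variable {A W K : Type*}

lemma hasDerivAt_div_sum {ι 𝕜 : Type*} [NontriviallyNormedField 𝕜] {S : Finset ι}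
    {f : 𝕜 → ι → 𝕜} {g : ι → 𝕜} {t : 𝕜}
    (hf : ∀ j ∈ S, HasDerivAt (fun τ => f τ j) (f t j * g j) t)
    (hsum : ∑ j ∈ S, f t j ≠ 0) {i : ι} (hi : i ∈ S) :
    HasDerivAt (fun τ => f τ i / ∑ j ∈ S, f τ j)
      (f t i / (∑ j ∈ S, f t j) * (g i - ∑ j ∈ S, f t j / (∑ l ∈ S, f t l) * g j)) t := by
  have average_eq : ∑ j ∈ S, f t j / (∑ l ∈ S, f t l) * g j =
      (∑ j ∈ S, f t j * g j) / ∑ l ∈ S, f t l := by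
    simp only [sum_div, div_mul_eq_mul_div]
  refine ((hf i hi).fun_div (HasDerivAt.fun_sum hf) hsum).congr_deriv ?_
  rw [average_eq]
  field_simp

lemma sum_erase_mul_max_sub_sum_erase_mul_max {ι R : Type*} [DecidableEq ι]
    [Ring R] [LinearOrder R] [IsOrderedAddMonoid R] {S : Finset ι} {p : ι → R}
    (hp : ∑ j ∈ S, p j = 1) (c : ι → R) (i : ι) :
    ∑ j ∈ S.erase i, p j * max (c j - c i) 0 - ∑ j ∈ S.erase i, p j * max (c i - c j) 0 =
      ∑ j ∈ S, p j * c j - c i := by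
  have max_sub_max (a b : R) : max (a - b) 0 - max (b - a) 0 = a - b := by
    simpa only [neg_sub] using max_zero_sub_max_neg_zero_eq_self (a - b)
  calc
    _ = ∑ j ∈ S.erase i, p j * (c j - c i) := by
      simp only [← sum_sub_distrib, ← mul_sub, max_sub_max]
    _ = ∑ j ∈ S, p j * (c j - c i) := sum_erase S (by rw [sub_self, mul_zero])
    _ = ∑ j ∈ S, p j * c j - c i := by
      simp only [mul_sub, sum_sub_distrib, ← sum_mul, hp, one_mul]

section Logit

variable [Fintype K] [DecidableEq W] (od : K → W) (r : ℝ)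

lemma sum_exp_od_pos (s : K → ℝ) (k : K) :
    0 < ∑ k' with od k' = od k, Real.exp (-r * s k') :=
  sum_pos (fun _ _ => Real.exp_pos _) ⟨k, by simp⟩

lemma logit_eq_of_od_eq (s : K → ℝ) {j k : K} (hjk : od j = od k) :
    logit od r s j = Real.exp (-r * s j) / ∑ k' with od k' = od k, Real.exp (-r * s k') := by
  rw [logit, hjk]

lemma sum_logit_eq_one (s : K → ℝ) (k : K) :
    ∑ k' with od k' = od k, logit od r s k' = 1 := by
  rw [sum_congr rfl fun j hj => logit_eq_of_od_eq od r s (mem_filter_univ j |>.mp hj), ← sum_div,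
    div_self (sum_exp_od_pos od r s k).ne']

lemma hasDerivAt_logit {s : ℝ → K → ℝ} {c : K → ℝ} {t : ℝ}
    (hs : ∀ k, HasDerivAt (fun τ => s τ k) (c k) t) (k : K) :
    HasDerivAt (fun τ => logit od r (s τ) k)
      (-r * logit od r (s t) k *
        (c k - ∑ k' with od k' = od k, logit od r (s t) k' * c k')) t := by
  have weight_deriv (j : K) : HasDerivAt (fun τ => Real.exp (-r * s τ j))
      (Real.exp (-r * s t j) * (-r * c j)) t := ((hs j).const_mul (-r)).exp
  have average_eq : ∑ k' with od k' = od k, Real.exp (-r * s t k') /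
        (∑ l with od l = od k, Real.exp (-r * s t l)) * (-r * c k') =
      -r * ∑ k' with od k' = od k, logit od r (s t) k' * c k' := by
    rw [mul_sum]
    refine sum_congr rfl fun j hj => ?_
    rw [logit_eq_of_od_eq od r (s t) (mem_filter_univ j |>.mp hj), mul_left_comm]
  refine (hasDerivAt_div_sum (fun j _ => weight_deriv j) (sum_exp_od_pos od r (s t) k).ne'
    (by simp)).congr_deriv ?_
  rw [average_eq, ← logit_eq_of_od_eq od r (s t) rfl]
  ring

theorem statement18_general [DecidableEq K] (s p c : ℝ → K → ℝ)
    (hp : ∀ t, p t = logit od r (s t))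
    (hs : ∀ k t, HasDerivAt (fun τ => s τ k) (c t k) t) (k : K) (t : ℝ) :
    HasDerivAt (fun τ => p τ k)
        (-r * p t k * (c t k - ∑ k' with od k' = od k, p t k' * c t k')) t ∧
      -r * p t k * (c t k - ∑ k' with od k' = od k, p t k' * c t k') =
        r * (p t k * (∑ k' with od k' = od k ∧ k' ≠ k, p t k' * max (c t k' - c t k) 0) -
          p t k * (∑ k' with od k' = od k ∧ k' ≠ k, p t k' * max (c t k - c t k') 0)) := by
  constructor
  · simp only [hp]
    exact hasDerivAt_logit od r (fun j => hs j t) k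
  · have p_sum : ∑ k' with od k' = od k, p t k' = 1 := hp t ▸ sum_logit_eq_one od r (s t) k
    have others_eq_erase : ({k' | od k' = od k ∧ k' ≠ k} : Finset K) =
        ({k' | od k' = od k} : Finset K).erase k := by
      rw [← filter_filter, filter_ne']
    rw [others_eq_erase, ← mul_sub, sum_erase_mul_max_sub_sum_erase_mul_max p_sum]
    ring

end Logit

/-- Equation (26): if `s : ℝ → ℝ^K` satisfies the continuous-time
CULO dynamic `ṡ = c(p)`, `p = q_r(s)`, then `p` is differentiable with
`ṗₖ = −r·pₖ·(cₖ(p) − ∑_{k' serving the same OD} p_{k'}·c_{k'}(p))`, and this quantity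
equals `r` times the right-hand side of the replicator (proportional pairwise
comparison) dynamic. -/
theorem statement18
    [Fintype A] [Fintype W] [Fintype K] [DecidableEq W] [DecidableEq K]
    (Λ : Matrix A K ℝ) (od : K → W) (d : W → ℝ)
    (hΛ : ∀ a k, Λ a k = 0 ∨ Λ a k = 1)
    (hd : ∀ w, 0 < d w)
    (u : (A → ℝ) → (A → ℝ))
    (hu : ContinuousOn u (Xset Λ od d))
    (r : ℝ) (hr : 0 < r)
    (s : ℝ → K → ℝ) (p : ℝ → K → ℝ)
    (hp : ∀ t, p t = logit od r (s t))
    (hs : ∀ k t, HasDerivAt (fun τ => s τ k) (routeCost Λ od d u (p t) k) t) :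
    ∀ k t,
      HasDerivAt (fun τ => p τ k)
        (-r * p t k * (routeCost Λ od d u (p t) k -
          ∑ k' ∈ Finset.univ.filter (fun k' => od k' = od k),
            p t k' * routeCost Λ od d u (p t) k')) t ∧
      -r * p t k * (routeCost Λ od d u (p t) k -
          ∑ k' ∈ Finset.univ.filter (fun k' => od k' = od k),
            p t k' * routeCost Λ od d u (p t) k')
        = r * (p t k *
            (∑ k' ∈ Finset.univ.filter (fun k' => od k' = od k ∧ k' ≠ k),
              p t k' *
                max (routeCost Λ od d u (p t) k' - routeCost Λ od d u (p t) k) 0)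
          - p t k *
            (∑ k' ∈ Finset.univ.filter (fun k' => od k' = od k ∧ k' ≠ k),
              p t k' *
                max (routeCost Λ od d u (p t) k - routeCost Λ od d u (p t) k') 0)) :=
  statement18_general od r s p (fun t => routeCost Λ od d u (p t)) hp hs
end
end
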